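/- Let X be a quantum-Wajsberg algebra and let x, y ∈ X with x ≤_Q y. Then, for every z ∈ X: (1) y = y∨x; (2) y* ≤_Q x*; (3) y→z ≤_Q x→z; (4) z→x ≤_Q z→y; (5) x∧z ≤_Q y∧z; (6) x∨z ≤_Q y∨z. -/

import Mathlib

/-- A bounded involutive BE algebra. -/
class InvBE (X : Type*) where
  imp : X → X → X
  one : X
  zero : X
  be1 : ∀ x : X, imp x x = one
  be2 : ∀ x : X, imp x one = one
  be3 : ∀ x : X, imp one x = x
  be4 : ∀ x y z : X, imp x (imp y z) = imp y (imp x z)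
  bound : ∀ x : X, imp zero x = one
  dn : ∀ x : X, imp (imp x zero) zero = x

namespace InvBE

variable {X : Type*} [InvBE X]

/-- Negation: `x* = x → 0`. -/
def neg (x : X) : X := imp x zero

/-- `x ∨ y = (x → y) → y`. -/
def sup (x y : X) : X := imp (imp x y) y

/-- `x ∧ y = ((x* → y*) → y*)*`. -/
def inf (x y : X) : X := neg (imp (imp (neg x) (neg y)) (neg y))

/-- `x ≤ y` iff `x → y = 1`. -/
def le (x y : X) : Prop := imp x y = one

/-- `x ≤_Q y` iff `x = x ∧ y`. -/
def leQ (x y : X) : Prop := x = inf x y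

end InvBE

/-!
Write `a* = neg a`. Since `x* → y* = y → x`, the relation `x ≤_Q y` says exactly
`x* = (y → x) → y*`, and then contraposition and exchange give `x → z = (y → x) → (y → z)` for
every `z`.

The instance `y = 0` of (QW) reads `x* ≤_Q (x → z)` and is, up to contraposition, the
implicative-orthomodular law `v ≤_Q (u → v)`. Applied to `x → z = (y → x) → (y → z)`, it makes
`→` antitone in its first argument. Antitonicity of `*` comes from `y* ≤_Q (y → x)` and the formula
for `x*`; the remaining monotonicity claims are compositions of these two.
-/

namespace InvBE

/-- An involutive BE algebra is implicative-orthomodular if `x ∧ (y → x) = x` for all `x`, `y`,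
encoded here as `x ≤_Q (y → x)`. This law makes `→` antitone in its first argument. -/
class IsImplicativeOrthomodular (X : Type*) [InvBE X] : Prop where
  leQ_imp_self : ∀ x y : X, leQ x (imp y x)

variable {X : Type*} [InvBE X] {x y : X}

section Involutive

lemma neg_neg (x : X) : neg (neg x) = x := dn x

lemma neg_zero : neg (zero : X) = one := be1 zero

lemma neg_one : neg (one : X) = zero := be3 zero

lemma imp_neg_comm (x y : X) : imp x (neg y) = imp y (neg x) := be4 x y zero

lemma neg_imp_neg (x y : X) : imp (neg x) (neg y) = imp y x := by
  rw [imp_neg_comm, neg_neg]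

lemma zero_inf (x : X) : inf zero x = zero := by
  rw [inf, neg_zero, be3, be1, neg_one]

lemma inf_zero (x : X) : inf x zero = zero := by
  rw [inf, neg_zero, be2, neg_one]

lemma leQ_iff_neg_eq_sup : leQ x y ↔ neg x = sup (neg x) (neg y) := by
  change x = neg (sup (neg x) (neg y)) ↔ _
  constructor <;> intro h
  · rw [← neg_neg (sup _ _), ← h]
  · rw [← h, neg_neg]

lemma neg_leQ_neg_iff_eq_sup : leQ (neg y) (neg x) ↔ y = sup y x := by
  rw [leQ_iff_neg_eq_sup, neg_neg, neg_neg]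

lemma leQ.neg_eq_imp (h : leQ x y) : neg x = imp (imp y x) (neg y) := by
  rw [← neg_imp_neg x y]
  exact leQ_iff_neg_eq_sup.1 h

lemma leQ.imp_eq_imp_imp (h : leQ x y) (z : X) : imp x z = imp (imp y x) (imp y z) :=
  calc imp x z = imp (neg z) (neg x) := (neg_imp_neg z x).symm
    _ = imp (neg z) (imp (imp y x) (neg y)) := by rw [h.neg_eq_imp]
    _ = imp (imp y x) (imp (neg z) (neg y)) := be4 _ _ _
    _ = imp (imp y x) (imp y z) := by rw [neg_imp_neg]

end Involutive

lemma isImplicativeOrthomodular_of_qw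
    (qw : ∀ x y z : X, imp x (inf (inf x y) (inf z x)) = inf (imp x y) (imp x z)) :
    IsImplicativeOrthomodular X where
  leQ_imp_self x y := by
    have neg_leQ_imp (u v : X) : leQ (neg u) (imp u v) := by
      have h := qw u zero v
      rwa [inf_zero, zero_inf] at h
    have h := neg_leQ_imp (neg x) (neg y)
    rwa [neg_neg, neg_imp_neg] at h

section Orthomodular

open IsImplicativeOrthomodular (leQ_imp_self)

variable [IsImplicativeOrthomodular X]

lemma neg_leQ_imp (x y : X) : leQ (neg x) (imp x y) := by
  rw [← neg_imp_neg y x]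
  exact leQ_imp_self _ _

lemma leQ.eq_sup (h : leQ x y) : y = sup y x :=
  calc y = neg (neg y) := (neg_neg y).symm
    _ = imp (imp (imp y x) (neg y)) (neg (imp y x)) := (neg_leQ_imp y x).neg_eq_imp
    _ = imp (neg x) (neg (imp y x)) := by rw [h.neg_eq_imp]
    _ = sup y x := neg_imp_neg x (imp y x)

lemma leQ.neg_leQ_neg (h : leQ x y) : leQ (neg y) (neg x) := neg_leQ_neg_iff_eq_sup.2 h.eq_sup

lemma leQ.imp_leQ_imp_right (h : leQ x y) (z : X) : leQ (imp y z) (imp x z) := by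
  rw [h.imp_eq_imp_imp z]
  exact leQ_imp_self _ _

lemma leQ.imp_leQ_imp_left (h : leQ x y) (z : X) : leQ (imp z x) (imp z y) := by
  rw [← neg_imp_neg x z, ← neg_imp_neg y z]
  exact h.neg_leQ_neg.imp_leQ_imp_right (neg z)

lemma leQ.sup_leQ_sup_right (h : leQ x y) (z : X) : leQ (sup x z) (sup y z) :=
  (h.imp_leQ_imp_right z).imp_leQ_imp_right z

lemma leQ.inf_leQ_inf_right (h : leQ x y) (z : X) : leQ (inf x z) (inf y z) :=
  (h.neg_leQ_neg.sup_leQ_sup_right (neg z)).neg_leQ_neg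

end Orthomodular

end InvBE

open InvBE in
theorem stmt_6_general {X : Type*} [InvBE X] [IsImplicativeOrthomodular X]
    (x y : X) (hxy : leQ x y) :
    ∀ z : X,
      y = sup y x ∧
      leQ (neg y) (neg x) ∧
      leQ (imp y z) (imp x z) ∧
      leQ (imp z x) (imp z y) ∧
      leQ (inf x z) (inf y z) ∧
      leQ (sup x z) (sup y z) :=
  fun z => ⟨hxy.eq_sup, hxy.neg_leQ_neg, hxy.imp_leQ_imp_right z, hxy.imp_leQ_imp_left z,
    hxy.inf_leQ_inf_right z, hxy.sup_leQ_sup_right z⟩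

open InvBE in
theorem stmt_6 {X : Type*} [InvBE X]
    (qw : ∀ x y z : X, imp x (inf (inf x y) (inf z x)) = inf (imp x y) (imp x z))
    (x y : X) (hxy : leQ x y) :
    ∀ z : X,
      y = sup y x ∧
      leQ (neg y) (neg x) ∧
      leQ (imp y z) (imp x z) ∧
      leQ (imp z x) (imp z y) ∧
      leQ (inf x z) (inf y z) ∧
      leQ (sup x z) (sup y z) := by
  have := isImplicativeOrthomodular_of_qw qw
  exact stmt_6_general x y hxy
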